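/- arXiv:1902.01303 — 2 statements merged into one kernel-verified Lean document; each statement's English description precedes it below -/
import Mathlib

section
/- Let Γ be a group with a finite symmetric generating set S and let ρ: Γ → GL(d,ℝ) be an {a_p}-Anosov representation. Then there exist constants C' > 0 and μ' > 0, depending only on ρ, such that for every geodesic ray (α_i)_{i≥0} in Γ with α_0 = e: the matrices ρ(α_i) have a gap of index p for all sufficiently large i, the limit ξ := lim_{i→∞} U_p(ρ(α_i)) exists in the Grassmannian of p-dimensional subspaces of ℝ^d, and d(U_p(ρ(α_i)), ξ) ≤ C'·e^{−μ'·i} for all such i. Moreover, if (α_i) and (β_i) are geodesic rays with α_0 = β_0 = e and sup_i d_Γ(α_i, β_i) < ∞, then they yield the same limit ξ. -/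
noncomputable section

open scoped Matrix RealInnerProductSpace
open Filter Topology

namespace Paper

abbrev Euc (d : ℕ) : Type := EuclideanSpace ℝ (Fin d)

/-- The action of a `d × d` real matrix on Euclidean space. -/
def act {d : ℕ} (g : Matrix (Fin d) (Fin d) ℝ) (v : Euc d) : Euc d :=
  Matrix.toEuclideanCLM (𝕜 := ℝ) g v

/-- The operator norm of a matrix acting on Euclidean space. -/
def opNorm {d : ℕ} (g : Matrix (Fin d) (Fin d) ℝ) : ℝ :=
  ‖(Matrix.toEuclideanCLM (𝕜 := ℝ) g : Euc d →L[ℝ] Euc d)‖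

/-- The underlying matrix of an element of `GL (Fin d) ℝ`. -/
def mat {d : ℕ} (g : GL (Fin d) ℝ) : Matrix (Fin d) (Fin d) ℝ := ↑g

/-- The `p`-th singular value (`1`-indexed), via the min-max characterization:
`σ_p(g)` is the largest, over `p`-dimensional subspaces `P`, of the minimal
stretch of unit vectors of `P`. -/
def sv {d : ℕ} (g : Matrix (Fin d) (Fin d) ℝ) (p : ℕ) : ℝ :=
  sSup { r | ∃ P : Submodule ℝ (Euc d), Module.finrank ℝ P = p ∧
      r = sInf { t | ∃ v ∈ P, ‖v‖ = 1 ∧ t = ‖act g v‖ } }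

/-- `g` has a gap of index `p` if `σ_p(g) > σ_{p+1}(g)`. -/
def HasGap {d : ℕ} (g : Matrix (Fin d) (Fin d) ℝ) (p : ℕ) : Prop :=
  sv g (p + 1) < sv g p

/-- `U` is a Cartan attractor of index `p` for `g`: for some singular value
decomposition `g = k·a·l` (`k`, `l` orthogonal, `a` diagonal with decreasing
nonnegative entries), `U` is the span of the first `p` columns of `k`. -/
def IsCartanAttractor {d : ℕ} (g : Matrix (Fin d) (Fin d) ℝ) (p : ℕ)
    (U : Submodule ℝ (Euc d)) : Prop :=
  ∃ k l : Matrix (Fin d) (Fin d) ℝ, ∃ σ : Fin d → ℝ,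
    k ∈ Matrix.unitaryGroup (Fin d) ℝ ∧ l ∈ Matrix.unitaryGroup (Fin d) ℝ ∧
    (∀ i j : Fin d, i ≤ j → σ j ≤ σ i) ∧ (∀ i, 0 ≤ σ i) ∧
    g = k * Matrix.diagonal σ * l ∧
    U = Submodule.span ℝ { x : Euc d | ∃ i : Fin d, (i : ℕ) < p ∧
          x = (EuclideanSpace.equiv (Fin d) ℝ).symm (fun j => k j i) }

/-- The Cartan attractor `U_p(g)`; when `g` has a gap of index `p` it is the
unique subspace satisfying `IsCartanAttractor g p`. -/
def cartanAttractor {d : ℕ} (g : Matrix (Fin d) (Fin d) ℝ) (p : ℕ) :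
    Submodule ℝ (Euc d) :=
  letI := Classical.propDecidable (∃ U, IsCartanAttractor g p U)
  if h : ∃ U, IsCartanAttractor g p U then h.choose else ⊥

/-- The angle `∠(P,Q)` between two subspaces: the infimum of angles between
nonzero vectors of `P` and `Q`. -/
def subAngle {d : ℕ} (P Q : Submodule ℝ (Euc d)) : ℝ :=
  sInf { θ | ∃ v ∈ P, v ≠ 0 ∧ ∃ w ∈ Q, w ≠ 0 ∧ θ = InnerProductGeometry.angle v w }

/-- `sin ∠(v,w)`. -/
def sinAngle {d : ℕ} (v w : Euc d) : ℝ := Real.sin (InnerProductGeometry.angle v w)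

/-- The distance `d(P,Q) = max_{v ∈ P∖{0}} min_{w ∈ Q∖{0}} sin ∠(v,w)`. -/
def grassDist {d : ℕ} (P Q : Submodule ℝ (Euc d)) : ℝ :=
  sSup { r | ∃ v ∈ P, v ≠ 0 ∧
      r = sInf { s | ∃ w ∈ Q, w ≠ 0 ∧ s = sinAngle v w } }

/-- The image `g·P` of a subspace under a matrix. -/
def mapMat {d : ℕ} (g : Matrix (Fin d) (Fin d) ℝ) (P : Submodule ℝ (Euc d)) :
    Submodule ℝ (Euc d) :=
  P.map ((Matrix.toEuclideanCLM (𝕜 := ℝ) g : Euc d →L[ℝ] Euc d) : Euc d →ₗ[ℝ] Euc d)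

/-- `m(g|_W)`, the minimal stretch of unit vectors of `W` under `g`. -/
def minRestrict {d : ℕ} (g : Matrix (Fin d) (Fin d) ℝ) (W : Submodule ℝ (Euc d)) : ℝ :=
  sInf { t | ∃ v ∈ W, ‖v‖ = 1 ∧ t = ‖act g v‖ }

/-- `‖g|_W‖`, the maximal stretch of unit vectors of `W` under `g`. -/
def normRestrict {d : ℕ} (g : Matrix (Fin d) (Fin d) ℝ) (W : Submodule ℝ (Euc d)) : ℝ :=
  sSup { t | ∃ v ∈ W, ‖v‖ = 1 ∧ t = ‖act g v‖ }


/-- The word length of `γ` with respect to the generating set `S`. -/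
def wordLength {Γ : Type*} [Group Γ] (S : Set Γ) (γ : Γ) : ℕ :=
  sInf { n | ∃ l : List Γ, l.length = n ∧ (∀ x ∈ l, x ∈ S) ∧ l.prod = γ }


/-! ### Helper lemmas -/

section Helpers

variable {d : ℕ}

/-- The continuous linear map of a matrix. -/
abbrev clm (g : Matrix (Fin d) (Fin d) ℝ) : Euc d →L[ℝ] Euc d :=
  Matrix.toEuclideanCLM (𝕜 := ℝ) g

lemma exists_basis_of_unitary (k : Matrix (Fin d) (Fin d) ℝ)
    (hk : k ∈ Matrix.unitaryGroup (Fin d) ℝ) :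
    ∃ u : OrthonormalBasis (Fin d) ℝ (Euc d), ∀ i,
      u i = WithLp.toLp 2 (fun j => k j i) := by
  have h1 : kᵀ * k = 1 := by
    have := (Matrix.mem_unitaryGroup_iff' (A := k)).1 hk
    simpa [Matrix.star_eq_conjTranspose, Matrix.conjTranspose_eq_transpose_of_trivial] using this
  have hon : Orthonormal ℝ (fun i : Fin d => (WithLp.toLp 2 (fun j => k j i) : Euc d)) := by
    rw [orthonormal_iff_ite]
    intro i j
    have h2 := congrFun (congrFun h1 i) j
    rw [Matrix.mul_apply, Matrix.one_apply] at h2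
    rw [← h2, PiLp.inner_apply]
    refine Finset.sum_congr rfl fun x _ => ?_
    simp [mul_comm]
  obtain ⟨b, hb⟩ := Orthonormal.exists_orthonormalBasis_extension_of_card_eq
    (𝕜 := ℝ) (E := Euc d) (ι := Fin d) (by simp)
    (v := fun i : Fin d => (WithLp.toLp 2 (fun j => k j i) : Euc d)) (s := Set.univ)
    (hon.comp _ Subtype.val_injective)
  exact ⟨b, fun i => hb i (Set.mem_univ _)⟩

/-- Singular value decomposition data in terms of orthonormal bases. -/
structure SVD (g : Matrix (Fin d) (Fin d) ℝ) where
  u : OrthonormalBasis (Fin d) ℝ (Euc d)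
  w : OrthonormalBasis (Fin d) ℝ (Euc d)
  σ : Fin d → ℝ
  anti : ∀ i j : Fin d, i ≤ j → σ j ≤ σ i
  nonneg : ∀ i, 0 ≤ σ i
  map : ∀ i, clm g (w i) = σ i • u i

lemma svd_of_attractor {g : Matrix (Fin d) (Fin d) ℝ} {p : ℕ} {U : Submodule ℝ (Euc d)}
    (h : IsCartanAttractor g p U) :
    ∃ D : SVD g, U = Submodule.span ℝ (D.u '' {i | (i : ℕ) < p}) := by
  obtain ⟨k, l, σ, hk, hl, hanti, hnn, hg, hU⟩ := h
  obtain ⟨u, hu⟩ := exists_basis_of_unitary k hk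
  have hl' : lᵀ ∈ Matrix.unitaryGroup (Fin d) ℝ := by
    rw [Matrix.mem_unitaryGroup_iff']
    have := (Matrix.mem_unitaryGroup_iff (A := l)).1 hl
    simpa [Matrix.star_eq_conjTranspose, Matrix.conjTranspose_eq_transpose_of_trivial] using this
  obtain ⟨w, hw⟩ := exists_basis_of_unitary lᵀ hl'
  have hll : l * lᵀ = 1 := by
    have := (Matrix.mem_unitaryGroup_iff (A := l)).1 hl
    simpa [Matrix.star_eq_conjTranspose, Matrix.conjTranspose_eq_transpose_of_trivial] using this
  refine ⟨⟨u, w, σ, hanti, hnn, ?_⟩, ?_⟩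
  · intro i
    have h1 : g * lᵀ = k * Matrix.diagonal σ := by
      rw [hg, Matrix.mul_assoc, hll, Matrix.mul_one]
    ext j
    rw [hw, hu]
    have h2 := congrFun (congrFun h1 j) i
    rw [Matrix.mul_diagonal, Matrix.mul_apply] at h2
    change (g *ᵥ (fun j => lᵀ j i)) j = σ i * k j i
    rw [mul_comm, ← h2]
    rfl
  · rw [hU]
    congr 1
    ext x
    simp only [Set.mem_ofPred_eq, Set.mem_image]
    constructor
    · rintro ⟨i, hi, rfl⟩
      exact ⟨i, hi, hu i⟩
    · rintro ⟨i, hi, rfl⟩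
      exact ⟨i, hi, hu i⟩

lemma exists_attractor (g : GL (Fin d) ℝ) (p : ℕ) : ∃ U, IsCartanAttractor (mat g) p U := by
  set A : Matrix (Fin d) (Fin d) ℝ := mat g with hA
  have hAdet : IsUnit A := g.isUnit
  have hpd : (A * Aᵀ).PosDef := by
    have := Matrix.PosDef.mul_conjTranspose_self A
      (Matrix.vecMul_injective_of_isUnit hAdet)
    simpa [Matrix.conjTranspose_eq_transpose_of_trivial] using this
  have hH : (A * Aᵀ).IsHermitian := hpd.isHermitian
  have hsym := Matrix.isSymmetric_toEuclideanLin_iff.2 hH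
  have hfr : Module.finrank ℝ (Euc d) = d := by simp
  set u := hsym.eigenvectorBasis hfr with hu
  set lam := hsym.eigenvalues hfr with hlam
  have hev : ∀ i, (A * Aᵀ) *ᵥ (u i).ofLp = lam i • (u i).ofLp := by
    intro i
    have := hsym.apply_eigenvectorBasis hfr i
    have h2 := congrArg WithLp.ofLp this
    exact h2
  have hanti : Antitone lam := hsym.eigenvalues_antitone hfr
  set k : Matrix (Fin d) (Fin d) ℝ := Matrix.of fun j i => u i j with hk
  have hkk : kᵀ * k = 1 := by
    ext i j
    rw [Matrix.mul_apply, Matrix.one_apply]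
    have := orthonormal_iff_ite.1 u.orthonormal i j
    rw [← this, PiLp.inner_apply]
    refine Finset.sum_congr rfl fun x _ => ?_
    simp [hk, mul_comm]
  have hAk : A * Aᵀ * k = k * Matrix.diagonal lam := by
    ext j i
    rw [Matrix.mul_diagonal]
    have := congrFun (hev i) j
    rw [mul_comm]
    exact this
  have hdiag : kᵀ * (A * Aᵀ) * k = Matrix.diagonal lam := by
    rw [Matrix.mul_assoc, hAk, ← Matrix.mul_assoc, hkk, Matrix.one_mul]
  have hpos : ∀ i, 0 < lam i := by
    intro i
    have hne : (u i).ofLp ≠ 0 := by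
      intro h0
      exact u.orthonormal.ne_zero i (by ext j; exact congrFun h0 j)
    have := hpd.dotProduct_mulVec_pos hne
    rw [hev, dotProduct_smul] at this
    have h3 : star (u i).ofLp ⬝ᵥ (u i).ofLp = 1 := by
      have h4 := congrFun (congrFun hkk i) i
      rw [Matrix.one_apply_eq, Matrix.mul_apply] at h4
      rw [← h4]
      simp [dotProduct, hk]
    rw [h3] at this
    simpa using this
  have hkk' : k * kᵀ = 1 := mul_eq_one_comm.1 hkk
  set s : Fin d → ℝ := fun i => Real.sqrt (lam i) with hs
  have hspos : ∀ i, 0 < s i := fun i => Real.sqrt_pos.2 (hpos i)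
  set l : Matrix (Fin d) (Fin d) ℝ := Matrix.diagonal (fun i => (s i)⁻¹) * kᵀ * A with hl
  have hll : l * lᵀ = 1 := by
    have : l * lᵀ = Matrix.diagonal (fun i => (s i)⁻¹) * (kᵀ * (A * Aᵀ) * k) *
        Matrix.diagonal (fun i => (s i)⁻¹) := by
      rw [hl]
      simp only [Matrix.transpose_mul, Matrix.transpose_transpose, Matrix.diagonal_transpose,
        Matrix.mul_assoc]
    rw [this, hdiag, Matrix.diagonal_mul_diagonal, Matrix.diagonal_mul_diagonal,
      ← Matrix.diagonal_one]
    congr 1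
    ext i
    have h5 : s i * s i = lam i := Real.mul_self_sqrt (hpos i).le
    have := (hspos i).ne'
    rw [← h5]
    field_simp
  refine ⟨_, k, l, s, ?_, ?_, ?_, fun i => (hspos i).le, ?_, rfl⟩
  · rw [Matrix.mem_unitaryGroup_iff']
    simpa [Matrix.star_eq_conjTranspose, Matrix.conjTranspose_eq_transpose_of_trivial] using hkk
  · rw [Matrix.mem_unitaryGroup_iff]
    simpa [Matrix.star_eq_conjTranspose, Matrix.conjTranspose_eq_transpose_of_trivial] using hll
  · intro i j hij
    exact Real.sqrt_le_sqrt (hanti hij)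
  · rw [hl, ← Matrix.mul_assoc, ← Matrix.mul_assoc, Matrix.mul_assoc k, Matrix.diagonal_mul_diagonal]
    have : (Matrix.diagonal fun i => s i * (s i)⁻¹) = (1 : Matrix (Fin d) (Fin d) ℝ) := by
      rw [← Matrix.diagonal_one]
      congr 1
      ext i
      exact mul_inv_cancel₀ (hspos i).ne'
    rw [this, Matrix.mul_one, hkk', Matrix.one_mul]

lemma cartanAttractor_spec (g : GL (Fin d) ℝ) (p : ℕ) :
    IsCartanAttractor (mat g) p (cartanAttractor (mat g) p) := by
  have h := exists_attractor g p
  unfold cartanAttractor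
  rw [dif_pos h]
  exact h.choose_spec

lemma inner_eq_zero_of_mem_span (b : OrthonormalBasis (Fin d) ℝ (Euc d)) (s : Set (Fin d))
    {v : Euc d} (hv : v ∈ Submodule.span ℝ (b '' s)) {i : Fin d} (hi : i ∉ s) :
    inner ℝ (b i) v = 0 := by
  induction hv using Submodule.span_induction with
  | mem x hx =>
    obtain ⟨j, hj, rfl⟩ := hx
    exact b.orthonormal.2 (fun h => hi (h ▸ hj))
  | zero => simp
  | add x y _ _ hx hy => rw [inner_add_right, hx, hy, add_zero]
  | smul a x _ hx => rw [inner_smul_right, hx, mul_zero]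

lemma finrank_span_basis (b : OrthonormalBasis (Fin d) ℝ (Euc d)) {p : ℕ} (hp : p ≤ d) :
    Module.finrank ℝ (Submodule.span ℝ (b '' {i | (i : ℕ) < p})) = p := by
  have hli : LinearIndependent ℝ (fun i : Fin p => b (Fin.castLE hp i)) :=
    b.orthonormal.linearIndependent.comp _ (Fin.castLE_injective hp)
  have h := finrank_span_eq_card hli
  rw [Fintype.card_fin] at h
  have hr : Set.range (fun i : Fin p => b (Fin.castLE hp i)) = b '' {i | (i : ℕ) < p} := by
    ext x
    constructor
    · rintro ⟨i, rfl⟩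
      exact ⟨_, by simp, rfl⟩
    · rintro ⟨i, hi, rfl⟩
      exact ⟨⟨i, hi⟩, rfl⟩
  rw [hr] at h
  exact h

namespace SVD

variable {g : Matrix (Fin d) (Fin d) ℝ} (D : SVD g)

lemma inner_map (v : Euc d) (i : Fin d) :
    inner ℝ (D.u i) (clm g v) = D.σ i * inner ℝ (D.w i) v := by
  conv_lhs => rw [← D.w.sum_repr' v]
  rw [map_sum, inner_sum, Finset.sum_eq_single i]
  · rw [map_smul, D.map, inner_smul_right, inner_smul_right, real_inner_self_eq_norm_sq,
      D.u.orthonormal.1 i]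
    ring
  · intro j _ hj
    rw [map_smul, D.map, inner_smul_right, inner_smul_right, D.u.orthonormal.2 hj.symm]
    ring
  · simp

lemma norm_sq (b : OrthonormalBasis (Fin d) ℝ (Euc d)) (v : Euc d) :
    ‖v‖ ^ 2 = ∑ i, (inner ℝ (b i) v) ^ 2 := by
  rw [← b.sum_sq_norm_inner_right v]
  simp

lemma lower (m : Fin d) {v : Euc d} (hv : ∀ i, m < i → inner ℝ (D.w i) v = 0) :
    D.σ m * ‖v‖ ≤ ‖clm g v‖ := by
  refine le_of_sq_le_sq ?_ (norm_nonneg _)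
  rw [mul_pow, norm_sq D.w v, norm_sq D.u (clm g v), Finset.mul_sum]
  refine Finset.sum_le_sum fun i _ => ?_
  rw [D.inner_map, mul_pow]
  rcases le_or_gt i m with h | h
  · have := D.anti i m h
    have := D.nonneg m
    gcongr
  · rw [hv i h]; simp

lemma upper (m : Fin d) {v : Euc d} (hv : ∀ i, i < m → inner ℝ (D.w i) v = 0) :
    ‖clm g v‖ ≤ D.σ m * ‖v‖ := by
  refine le_of_sq_le_sq ?_ (mul_nonneg (D.nonneg m) (norm_nonneg _))
  rw [mul_pow, norm_sq D.w v, norm_sq D.u (clm g v), Finset.mul_sum]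
  refine Finset.sum_le_sum fun i _ => ?_
  rw [D.inner_map, mul_pow]
  rcases le_or_gt m i with h | h
  · have := D.anti m i h
    have := D.nonneg i
    gcongr
  · rw [hv i h]; simp

/-- Lower bound for the min-max singular value. -/
lemma le_sv (m : Fin d) : D.σ m ≤ sv g (m + 1) := by
  set P := Submodule.span ℝ (D.w '' {i | (i : ℕ) < m + 1}) with hP
  have hfr : Module.finrank ℝ P = m + 1 := finrank_span_basis D.w m.2
  have hmem : D.w m ∈ P := Submodule.subset_span ⟨m, by simp, rfl⟩
  have h1 : D.σ m ≤ sInf { t | ∃ v ∈ P, ‖v‖ = 1 ∧ t = ‖act g v‖ } := by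
    refine le_csInf ⟨_, D.w m, hmem, D.w.orthonormal.1 m, rfl⟩ ?_
    rintro t ⟨v, hv, hv1, rfl⟩
    have := D.lower m (v := v) fun i hi =>
      inner_eq_zero_of_mem_span D.w _ hv (by
        simp only [Set.mem_ofPred_eq, not_lt]; exact hi)
    rw [hv1, mul_one] at this
    exact this
  refine h1.trans (le_csSup ?_ ⟨P, hfr, rfl⟩)
  refine ⟨‖clm g‖, ?_⟩
  rintro r ⟨Q, -, rfl⟩
  by_cases hne : ∃ v ∈ Q, ‖v‖ = 1
  · obtain ⟨v, hv, hv1⟩ := hne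
    have hbdd : BddBelow { t | ∃ v ∈ Q, ‖v‖ = 1 ∧ t = ‖act g v‖ } := by
      refine ⟨0, ?_⟩
      rintro t ⟨v, -, -, rfl⟩
      exact norm_nonneg _
    refine (csInf_le hbdd ⟨v, hv, hv1, rfl⟩).trans ?_
    · have := (clm g).le_opNorm v
      rw [hv1, mul_one] at this
      exact this
  · have : { t | ∃ v ∈ Q, ‖v‖ = 1 ∧ t = ‖act g v‖ } = ∅ := by
      ext t
      simp only [Set.mem_ofPred_eq, Set.mem_empty_iff_false, iff_false]
      rintro ⟨v, hv, hv1, -⟩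
      exact hne ⟨v, hv, hv1⟩
    rw [this, Real.sInf_empty]
    exact norm_nonneg _

/-- Upper bound for the min-max singular value of `g' = g * h⁻¹`. -/
lemma sv_le (m : Fin d) (g' : Matrix (Fin d) (Fin d) ℝ) (H' : Euc d →L[ℝ] Euc d)
    (hH : ∀ v, clm g' v = clm g (H' v)) : sv g' (m + 1) ≤ D.σ m * ‖H'‖ := by
  refine Real.sSup_le ?_ (mul_nonneg (D.nonneg m) (norm_nonneg _))
  rintro r ⟨P, hP, rfl⟩
  let f : P →ₗ[ℝ] (Fin (m : ℕ) → ℝ) := LinearMap.pi fun i =>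
    ((innerSL ℝ (D.w (Fin.castLE m.2.le i))).toLinearMap ∘ₗ H'.toLinearMap) ∘ₗ P.subtype
  have hker : LinearMap.ker f ≠ ⊥ := LinearMap.ker_ne_bot_of_finrank_lt (by
    rw [hP]; simp)
  obtain ⟨x, hx, hx0⟩ := (Submodule.ne_bot_iff _).1 hker
  have hx0' : (x : Euc d) ≠ 0 := fun h => hx0 (Subtype.ext h)
  have hn : ‖(x : Euc d)‖ ≠ 0 := norm_ne_zero_iff.2 hx0'
  have hx' : ∀ i, i < m → inner ℝ (D.w i) (H' x) = 0 := by
    intro i hi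
    have := congrFun (LinearMap.mem_ker.1 hx) ⟨i, hi⟩
    exact this
  set y : Euc d := ‖(x : Euc d)‖⁻¹ • (x : Euc d) with hy
  have hy1 : ‖y‖ = 1 := by
    rw [hy, norm_smul, norm_inv, norm_norm, inv_mul_cancel₀ hn]
  have hbdd : BddBelow { t | ∃ v ∈ P, ‖v‖ = 1 ∧ t = ‖act g' v‖ } := by
    refine ⟨0, ?_⟩
    rintro t ⟨v, -, -, rfl⟩
    exact norm_nonneg _
  refine (csInf_le hbdd ⟨y, P.smul_mem _ x.2, hy1, rfl⟩).trans ?_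
  · have h1 : ‖act g' y‖ = ‖clm g (H' y)‖ := by rw [← hH]; rfl
    rw [h1]
    refine (D.upper m (v := H' y) ?_).trans ?_
    · intro i hi
      rw [hy, map_smul, inner_smul_right, hx' i hi, mul_zero]
    · have := H'.le_opNorm y
      rw [hy1, mul_one] at this
      exact mul_le_mul_of_nonneg_left this (D.nonneg m)

lemma pos (hinj : Function.Injective (clm g)) (i : Fin d) : 0 < D.σ i := by
  refine lt_of_le_of_ne (D.nonneg i) fun h => ?_
  have h1 := D.map i
  rw [← h, zero_smul] at h1
  exact D.w.orthonormal.ne_zero i (hinj (h1.trans (map_zero _).symm))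

end SVD

/-- The key estimate. -/
lemma key (a b : GL (Fin d) ℝ) {p : ℕ} (hp1 : 1 ≤ p) (hpd : p ≤ d - 1) {v : Euc d}
    (hv : v ∈ cartanAttractor (mat (a * b)) p) :
    ‖v - (cartanAttractor (mat a) p).starProjection v‖ ≤
      ‖clm (mat b)‖ * ‖clm (mat b⁻¹)‖ * (sv (mat a) (p + 1) / sv (mat a) p) * ‖v‖ := by
  obtain ⟨D, hD⟩ := svd_of_attractor (cartanAttractor_spec a p)
  obtain ⟨D', hD'⟩ := svd_of_attractor (cartanAttractor_spec (a * b) p)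
  have hmul : ∀ (x y : GL (Fin d) ℝ) (v : Euc d),
      clm (mat (x * y)) v = clm (mat x) (clm (mat y) v) := by
    intro x y v
    have : mat (x * y) = mat x * mat y := rfl
    rw [this]
    simp only [clm, map_mul]
    rfl
  have hone : ∀ v : Euc d, clm (mat (1 : GL (Fin d) ℝ)) v = v := by
    intro v
    have : mat (1 : GL (Fin d) ℝ) = 1 := rfl
    rw [this]
    simp only [clm, map_one]
    rfl
  have hinj : ∀ x : GL (Fin d) ℝ, Function.Injective (clm (mat x)) := by
    intro x
    refine Function.LeftInverse.injective (g := clm (mat x⁻¹)) fun v => ?_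
    rw [← hmul, inv_mul_cancel, hone]
  let ip : Fin d := ⟨p, by omega⟩
  let iq : Fin d := ⟨p - 1, by omega⟩
  set x : Euc d := clm (mat (a * b)⁻¹) v with hx
  have hxv : clm (mat (a * b)) x = v := by rw [hx, ← hmul, mul_inv_cancel, hone]
  have hσ'pos := D'.pos (hinj (a * b))
  have hσpos := D.pos (hinj a)
  have hxv_norm : D'.σ iq * ‖x‖ ≤ ‖v‖ := by
    have := D'.lower iq (v := x) ?_
    · rwa [hxv] at this
    · intro i hi
      have h1 := D'.inner_map x i
      rw [hxv] at h1
      rw [hD'] at hv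
      rw [inner_eq_zero_of_mem_span D'.u _ hv] at h1
      · exact (mul_eq_zero.1 h1.symm).resolve_left (hσ'pos i).ne'
      · have : p - 1 < (i : ℕ) := hi
        simp only [Set.mem_ofPred_eq]
        omega
  have hsv1 : D.σ ip ≤ sv (mat a) (p + 1) := D.le_sv ip
  have hsv2 : sv (mat a) p ≤ D'.σ iq * ‖clm (mat b⁻¹)‖ := by
    have := D'.sv_le iq (mat a) (clm (mat b⁻¹)) fun v => by
      rw [← hmul, mul_inv_cancel_right]
    have h2 : (iq : ℕ) + 1 = p := by change p - 1 + 1 = p; omega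
    rwa [h2] at this
  have hsv3 : 0 < sv (mat a) p := by
    have := D.le_sv iq
    have h2 : (iq : ℕ) + 1 = p := by change p - 1 + 1 = p; omega
    rw [h2] at this
    exact (hσpos iq).trans_le this
  set U := cartanAttractor (mat a) p with hU
  set e := v - U.starProjection v with he
  set y := clm (mat b) x with hy
  have hvy : v = clm (mat a) y := by rw [hy, ← hmul, hxv]
  have hey : ‖e‖ ≤ D.σ ip * ‖y‖ := by
    refine le_of_sq_le_sq ?_ (mul_nonneg (D.nonneg _) (norm_nonneg _))
    rw [mul_pow, SVD.norm_sq D.w y, SVD.norm_sq D.u e, Finset.mul_sum]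
    refine Finset.sum_le_sum fun i _ => ?_
    rcases lt_or_ge (i : ℕ) p with h | h
    · have h1 : inner ℝ (D.u i) e = 0 := by
        have hm : D.u i ∈ U := by
          rw [hD]; exact Submodule.subset_span ⟨i, h, rfl⟩
        exact Submodule.inner_right_of_mem_orthogonal hm
          (U.sub_starProjection_mem_orthogonal v)
      rw [h1, zero_pow two_ne_zero]
      exact mul_nonneg (sq_nonneg _) (sq_nonneg _)
    · have h1 : inner ℝ (D.u i) e = D.σ i * inner ℝ (D.w i) y := by
        have h3 : U.starProjection v ∈ Submodule.span ℝ (D.u '' {i | (i : ℕ) < p}) := by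
          have := U.starProjection_apply_mem v
          exact hD.le this
        have h4 : inner ℝ (D.u i) (U.starProjection v) = 0 :=
          inner_eq_zero_of_mem_span D.u _ h3 (by simpa using h)
        rw [he, inner_sub_right, h4, sub_zero, ← D.inner_map y i, ← hvy]
      rw [h1, mul_pow]
      have := D.anti ip i h
      have := D.nonneg i
      gcongr
  have hyx : ‖y‖ ≤ ‖clm (mat b)‖ * ‖x‖ := ContinuousLinearMap.le_opNorm _ _
  have hsv1' : 0 ≤ sv (mat a) (p + 1) := (D.nonneg ip).trans hsv1
  have : ‖e‖ * sv (mat a) p ≤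
      ‖clm (mat b)‖ * ‖clm (mat b⁻¹)‖ * sv (mat a) (p + 1) * ‖v‖ := by
    calc ‖e‖ * sv (mat a) p
        ≤ (sv (mat a) (p + 1) * (‖clm (mat b)‖ * ‖x‖)) * (D'.σ iq * ‖clm (mat b⁻¹)‖) := by
          refine mul_le_mul (hey.trans ?_) hsv2 hsv3.le (by positivity)
          exact mul_le_mul hsv1 hyx (norm_nonneg _) hsv1'
      _ = ‖clm (mat b)‖ * ‖clm (mat b⁻¹)‖ * sv (mat a) (p + 1) * (D'.σ iq * ‖x‖) := by ring
      _ ≤ _ := by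
          refine mul_le_mul_of_nonneg_left hxv_norm (by positivity)
  rw [← le_div_iff₀ hsv3] at this
  refine this.trans (le_of_eq ?_)
  ring

lemma sv_pos (a : GL (Fin d) ℝ) {p : ℕ} (hp1 : 1 ≤ p) (hpd : p ≤ d - 1) :
    0 < sv (mat a) p := by
  obtain ⟨D, -⟩ := svd_of_attractor (cartanAttractor_spec a p)
  let iq : Fin d := ⟨p - 1, by omega⟩
  have hinj : Function.Injective (clm (mat a)) := by
    refine Function.LeftInverse.injective (g := clm (mat a⁻¹)) fun v => ?_
    have h1 : mat a⁻¹ * mat a = 1 := by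
      change ((a⁻¹ * a : GL (Fin d) ℝ) : Matrix (Fin d) (Fin d) ℝ) = 1
      rw [inv_mul_cancel]; rfl
    change (clm (mat a⁻¹) * clm (mat a)) v = v
    simp only [clm, ← map_mul, h1, map_one]
    rfl
  have := D.le_sv iq
  have h2 : (iq : ℕ) + 1 = p := by change p - 1 + 1 = p; omega
  rw [h2] at this
  exact (D.pos hinj iq).trans_le this

lemma finrank_attractor (a : GL (Fin d) ℝ) {p : ℕ} (hpd : p ≤ d) :
    Module.finrank ℝ (cartanAttractor (mat a) p) = p := by
  obtain ⟨D, hD⟩ := svd_of_attractor (cartanAttractor_spec a p)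
  rw [hD]
  exact finrank_span_basis D.u hpd

lemma sinAngle_nonneg (v w : Euc d) : 0 ≤ sinAngle v w := InnerProductGeometry.sin_angle_nonneg _ _

lemma grassDist_nonneg (P Q : Submodule ℝ (Euc d)) : 0 ≤ grassDist P Q := by
  refine Real.sSup_nonneg ?_
  rintro r ⟨v, -, -, rfl⟩
  refine Real.sInf_nonneg ?_
  rintro s ⟨w, -, -, rfl⟩
  exact sinAngle_nonneg _ _

lemma sinAngle_starProjection (Q : Submodule ℝ (Euc d)) {v : Euc d}
    (hw : Q.starProjection v ≠ 0) :
    sinAngle v (Q.starProjection v) * ‖v‖ = ‖v - Q.starProjection v‖ := by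
  set w := Q.starProjection v with hwd
  have horth : inner ℝ (v - w) w = 0 :=
    Q.starProjection_inner_eq_zero v w (Q.starProjection_apply_mem v)
  have hvw : inner ℝ v w = ‖w‖ ^ 2 := by
    rw [inner_sub_left, real_inner_self_eq_norm_sq] at horth
    linarith
  have hsq : ‖v - w‖ ^ 2 = ‖v‖ ^ 2 - ‖w‖ ^ 2 := by
    rw [norm_sub_sq_real, hvw]; ring
  have h := InnerProductGeometry.sin_angle_mul_norm_mul_norm v w
  have hwn : 0 < ‖w‖ := norm_pos_iff.2 hw
  have h2 : (sinAngle v w * ‖v‖) * ‖w‖ = ‖v - w‖ * ‖w‖ := by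
    have h3 : (sinAngle v w * ‖v‖) * ‖w‖ = sinAngle v w * (‖v‖ * ‖w‖) := by ring
    rw [h3]
    unfold sinAngle
    rw [h, real_inner_self_eq_norm_sq, real_inner_self_eq_norm_sq, hvw]
    rw [show ‖v‖ ^ 2 * ‖w‖ ^ 2 - ‖w‖ ^ 2 * ‖w‖ ^ 2 = (‖v - w‖ * ‖w‖) ^ 2 by
      rw [mul_pow, hsq]; ring]
    exact Real.sqrt_sq (by positivity)
  exact mul_right_cancel₀ hwn.ne' h2

lemma grassDist_le (P Q : Submodule ℝ (Euc d)) {r : ℝ} (hr : 0 ≤ r)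
    (h : ∀ v ∈ P, ‖v - Q.starProjection v‖ ≤ r * ‖v‖) : grassDist P Q ≤ r := by
  refine Real.sSup_le ?_ hr
  rintro _ ⟨v, hv, hv0, rfl⟩
  have hvn : 0 < ‖v‖ := norm_pos_iff.2 hv0
  have hb : BddBelow { s | ∃ w ∈ Q, w ≠ 0 ∧ s = sinAngle v w } :=
    ⟨0, by rintro s ⟨w, -, -, rfl⟩; exact sinAngle_nonneg _ _⟩
  by_cases hw : Q.starProjection v = 0
  · have h1 : 1 ≤ r := by
      have := h v hv
      rw [hw, sub_zero] at this
      nlinarith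
    refine le_trans ?_ h1
    by_cases hne : ∃ w ∈ Q, w ≠ 0
    · obtain ⟨w, hwQ, hw0⟩ := hne
      exact (csInf_le hb ⟨w, hwQ, hw0, rfl⟩).trans (Real.sin_le_one _)
    · have : { s | ∃ w ∈ Q, w ≠ 0 ∧ s = sinAngle v w } = ∅ := by
        ext t
        simp only [Set.mem_ofPred_eq, Set.mem_empty_iff_false, iff_false]
        rintro ⟨w, hw, hw1, -⟩
        exact hne ⟨w, hw, hw1⟩
      rw [this, Real.sInf_empty]
      exact zero_le_one
  · refine (csInf_le hb ⟨_, Q.starProjection_apply_mem v, hw, rfl⟩).trans ?_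
    have := h v hv
    rw [← sinAngle_starProjection Q hw] at this
    exact le_of_mul_le_mul_right this hvn

lemma norm_proj_sub_le (U V : Submodule ℝ (Euc d)) {A B : ℝ} (hA : 0 ≤ A) (hB : 0 ≤ B)
    (hUV : ∀ v ∈ U, ‖v - V.starProjection v‖ ≤ A * ‖v‖)
    (hVU : ∀ v ∈ V, ‖v - U.starProjection v‖ ≤ B * ‖v‖) :
    ‖U.starProjection - V.starProjection‖ ≤ A + B := by
  refine ContinuousLinearMap.opNorm_le_bound _ (by positivity) fun x => ?_
  set z := V.starProjection (x - U.starProjection x) with hz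
  have hdec : (U.starProjection - V.starProjection) x =
      (U.starProjection x - V.starProjection (U.starProjection x)) - z := by
    rw [hz, map_sub]
    simp
  have h1 : ‖U.starProjection x - V.starProjection (U.starProjection x)‖ ≤ A * ‖x‖ :=
    (hUV _ (U.starProjection_apply_mem x)).trans
      (mul_le_mul_of_nonneg_left (U.norm_starProjection_apply_le x) hA)
  have hzV : z ∈ V := V.starProjection_apply_mem _
  have h2 : ‖z‖ ≤ B * ‖x‖ := by
    have e1 : ‖z‖ ^ 2 = inner ℝ z (x - U.starProjection x) := by
      have := V.starProjection_inner_eq_zero (x - U.starProjection x) z hzV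
      rw [← hz, inner_sub_left, real_inner_self_eq_norm_sq, real_inner_comm] at this
      linarith
    have e2 : inner ℝ z (x - U.starProjection x) = inner ℝ (z - U.starProjection z) x := by
      rw [inner_sub_left, inner_sub_right, U.inner_starProjection_left_eq_right]
    have e3 : ‖z‖ ^ 2 ≤ B * ‖z‖ * ‖x‖ := by
      rw [e1, e2]
      refine (real_inner_le_norm _ _).trans ?_
      exact mul_le_mul_of_nonneg_right (hVU z hzV) (norm_nonneg _)
    rcases (norm_nonneg z).eq_or_lt with h0 | h0
    · rw [← h0]; positivity
    · have : ‖z‖ * ‖z‖ ≤ ‖z‖ * (B * ‖x‖) := by nlinarith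
      exact le_of_mul_le_mul_left this h0
  rw [hdec]
  refine (norm_sub_le _ _).trans ?_
  rw [add_mul]
  exact add_le_add h1 h2

end Helpers

section Words

variable {Γ : Type*} [Group Γ] {d : ℕ}

lemma exists_norm_bound (S : Finset Γ) (ρ : Γ →* GL (Fin d) ℝ) :
    ∃ M : ℝ, 1 ≤ M ∧ ∀ s ∈ S, ‖clm (mat (ρ s))‖ ≤ M := by
  refine ⟨1 + ∑ s ∈ S, ‖clm (mat (ρ s))‖, ?_, fun s hs => ?_⟩
  · have : 0 ≤ ∑ s ∈ S, ‖clm (mat (ρ s))‖ := Finset.sum_nonneg fun _ _ => norm_nonneg _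
    linarith
  · have := Finset.single_le_sum (f := fun s => ‖clm (mat (ρ s))‖)
      (fun _ _ => norm_nonneg _) hs
    linarith

lemma norm_clm_mul_le (ρ : Γ →* GL (Fin d) ℝ) (x y : Γ) :
    ‖clm (mat (ρ (x * y)))‖ ≤ ‖clm (mat (ρ x))‖ * ‖clm (mat (ρ y))‖ := by
  have h : mat (ρ (x * y)) = mat (ρ x) * mat (ρ y) := by rw [map_mul]; rfl
  rw [h]
  simp only [clm, map_mul]
  exact norm_mul_le _ _

lemma norm_clm_one_le (ρ : Γ →* GL (Fin d) ℝ) : ‖clm (mat (ρ 1))‖ ≤ 1 := by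
  have h : mat (ρ (1 : Γ)) = 1 := by rw [map_one]; rfl
  rw [h]
  simp only [clm, map_one]
  exact ContinuousLinearMap.norm_id_le

lemma norm_list_prod_le (S : Finset Γ) (hSsymm : ∀ s ∈ S, s⁻¹ ∈ S) (ρ : Γ →* GL (Fin d) ℝ)
    {M : ℝ} (hM1 : 1 ≤ M) (hM : ∀ s ∈ S, ‖clm (mat (ρ s))‖ ≤ M) (l : List Γ)
    (hl : ∀ x ∈ l, x ∈ (S : Set Γ)) :
    ‖clm (mat (ρ l.prod))‖ ≤ M ^ l.length ∧ ‖clm (mat (ρ l.prod⁻¹))‖ ≤ M ^ l.length := by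
  have hM0 : 0 ≤ M := zero_le_one.trans hM1
  induction l with
  | nil => simpa using norm_clm_one_le ρ
  | cons a l ih =>
    obtain ⟨h1, h2⟩ := ih fun x hx => hl x (List.mem_cons_of_mem _ hx)
    have ha : a ∈ S := hl a List.mem_cons_self
    rw [List.prod_cons, List.length_cons, mul_inv_rev]
    constructor
    · refine (norm_clm_mul_le ρ _ _).trans ?_
      rw [pow_succ']
      exact mul_le_mul (hM a ha) h1 (norm_nonneg _) hM0
    · refine (norm_clm_mul_le ρ _ _).trans ?_
      rw [pow_succ]
      exact mul_le_mul h2 (hM _ (hSsymm a ha)) (norm_nonneg _) (pow_nonneg hM0 _)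

lemma norm_le_of_wordLength (S : Finset Γ) (hSsymm : ∀ s ∈ S, s⁻¹ ∈ S)
    (hSgen : Subgroup.closure (S : Set Γ) = ⊤) (ρ : Γ →* GL (Fin d) ℝ)
    {M : ℝ} (hM1 : 1 ≤ M) (hM : ∀ s ∈ S, ‖clm (mat (ρ s))‖ ≤ M) {γ : Γ} {D : ℕ}
    (hD : wordLength (S : Set Γ) γ ≤ D) :
    ‖clm (mat (ρ γ))‖ ≤ M ^ D ∧ ‖clm (mat (ρ γ⁻¹))‖ ≤ M ^ D := by
  have hne : { n | ∃ l : List Γ, l.length = n ∧ (∀ x ∈ l, x ∈ (S : Set Γ)) ∧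
      l.prod = γ }.Nonempty := by
    have hγ : γ ∈ Subgroup.closure (S : Set Γ) := by rw [hSgen]; trivial
    rw [← Subgroup.mem_toSubmonoid, Subgroup.closure_toSubmonoid] at hγ
    obtain ⟨l, hl, hlp⟩ := Submonoid.exists_list_of_mem_closure hγ
    refine ⟨l.length, l, rfl, fun x hx => ?_, hlp⟩
    rcases hl x hx with h | h
    · exact h
    · have := hSsymm _ h
      rwa [inv_inv] at this
  obtain ⟨l, hlen, hl, hlp⟩ := Nat.sInf_mem hne
  have hle : l.length ≤ D := by
    rw [hlen]; exact hD
  obtain ⟨h1, h2⟩ := norm_list_prod_le S hSsymm ρ hM1 hM l hl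
  rw [hlp] at h1 h2
  have h3 : M ^ l.length ≤ M ^ D := pow_le_pow_right₀ hM1 hle
  exact ⟨h1.trans h3, h2.trans h3⟩

end Words

/-- Proposition 3.6/Lemma 3.7 of the paper: existence and exponential convergence of
the boundary map along geodesic rays, with independence of the ray. -/
theorem stmt11 {Γ : Type*} [Group Γ] (S : Finset Γ)
    (hSsymm : ∀ s ∈ S, s⁻¹ ∈ S) (hSgen : Subgroup.closure (S : Set Γ) = ⊤)
    {d : ℕ} (p : ℕ) (hp1 : 1 ≤ p) (hpd : p ≤ d - 1)
    (ρ : Γ →* GL (Fin d) ℝ)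
    (c μ : ℝ) (hc : 0 < c) (hμ : 0 < μ)
    (hAnosov : ∀ γ : Γ, sv (mat (ρ γ)) (p + 1) / sv (mat (ρ γ)) p ≤
      c * Real.exp (-μ * (wordLength (S : Set Γ) γ : ℝ))) :
    ∃ C' > (0 : ℝ), ∃ μ' > (0 : ℝ), ∀ α : ℕ → Γ,
      (∀ i j : ℕ, wordLength (S : Set Γ) ((α i)⁻¹ * α j) = Nat.dist i j) →
      α 0 = 1 →
      ∃ N : ℕ, (∀ i, N ≤ i → HasGap (mat (ρ (α i))) p) ∧
        ∃ ξ : Submodule ℝ (Euc d), Module.finrank ℝ ξ = p ∧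
          (∀ i, N ≤ i →
            grassDist (cartanAttractor (mat (ρ (α i))) p) ξ ≤
              C' * Real.exp (-μ' * (i : ℝ))) ∧
          ∀ β : ℕ → Γ,
            (∀ i j : ℕ, wordLength (S : Set Γ) ((β i)⁻¹ * β j) = Nat.dist i j) →
            β 0 = 1 →
            (∃ D : ℕ, ∀ i, wordLength (S : Set Γ) ((α i)⁻¹ * β i) ≤ D) →
            Filter.Tendsto (fun i : ℕ => grassDist (cartanAttractor (mat (ρ (β i))) p) ξ)
              Filter.atTop (nhds 0) := by
  classical
  obtain ⟨M, hM1, hM⟩ := exists_norm_bound S ρ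
  set K : ℕ → ℝ := fun D => M ^ D * M ^ D with hK
  have hKpos : ∀ D, 0 < K D := fun D => by
    have : 0 < M := zero_lt_one.trans_le hM1
    positivity
  set U : Γ → Submodule ℝ (Euc d) := fun γ => cartanAttractor (mat (ρ γ)) p with hU
  -- the basic estimate
  have hstep : ∀ (a b : Γ) (D : ℕ), wordLength (S : Set Γ) (a⁻¹ * b) ≤ D →
      ∀ v ∈ U b, ‖v - (U a).starProjection v‖ ≤
        K D * (c * Real.exp (-μ * (wordLength (S : Set Γ) a : ℝ))) * ‖v‖ := by
    intro a b D hD v hv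
    have hb : ρ b = ρ a * ρ (a⁻¹ * b) := by rw [← map_mul, mul_inv_cancel_left]
    have hv' : v ∈ cartanAttractor (mat (ρ a * ρ (a⁻¹ * b))) p := by rw [← hb]; exact hv
    refine (key (ρ a) (ρ (a⁻¹ * b)) hp1 hpd hv').trans ?_
    obtain ⟨h1, h2⟩ := norm_le_of_wordLength S hSsymm hSgen ρ hM1 hM hD
    rw [map_inv] at h2
    have h3 := hAnosov a
    have h4 : 0 ≤ M ^ D := pow_nonneg (zero_le_one.trans hM1) _
    refine mul_le_mul_of_nonneg_right ?_ (norm_nonneg _)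
    have hKn : ‖clm (mat (ρ (a⁻¹ * b)))‖ * ‖clm (mat (ρ (a⁻¹ * b))⁻¹)‖ ≤ K D :=
      mul_le_mul h1 h2 (norm_nonneg _) h4
    calc _ ≤ ‖clm (mat (ρ (a⁻¹ * b)))‖ * ‖clm (mat (ρ (a⁻¹ * b))⁻¹)‖ *
          (c * Real.exp (-μ * (wordLength (S : Set Γ) a : ℝ))) :=
          mul_le_mul_of_nonneg_left h3 (by positivity)
      _ ≤ _ := mul_le_mul_of_nonneg_right hKn (by positivity)
  have hlen : ∀ α : ℕ → Γ,
      (∀ i j : ℕ, wordLength (S : Set Γ) ((α i)⁻¹ * α j) = Nat.dist i j) →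
      α 0 = 1 → ∀ i, wordLength (S : Set Γ) (α i) = i := by
    intro α hα h0 i
    have := hα 0 i
    rw [h0, inv_one, one_mul] at this
    rw [this]
    simp [Nat.dist]
  set r : ℝ := Real.exp (-μ) with hr
  have hr0 : 0 < r := Real.exp_pos _
  have hr1 : r < 1 := Real.exp_lt_one_iff.2 (by linarith)
  have hrpow : ∀ i : ℕ, Real.exp (-μ * (i : ℝ)) = r ^ i := fun i => by
    rw [hr, ← Real.exp_nat_mul]; congr 1; ring
  set C : ℝ := K 1 * c + K 1 * c with hC
  have hCpos : 0 < C := by have := hKpos 1; positivity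
  refine ⟨C / (1 - r), div_pos hCpos (by linarith), μ, hμ, ?_⟩
  intro α hα h0
  have hlenα := hlen α hα h0
  -- gap
  have hgap : ∃ N : ℕ, ∀ i, N ≤ i → HasGap (mat (ρ (α i))) p := by
    have ht : Filter.Tendsto (fun i : ℕ => c * r ^ i) Filter.atTop (nhds 0) := by
      have := (tendsto_pow_atTop_nhds_zero_of_lt_one hr0.le hr1).const_mul c
      rwa [mul_zero] at this
    obtain ⟨N, hN⟩ := Filter.eventually_atTop.1 (ht.eventually (gt_mem_nhds zero_lt_one))
    refine ⟨N, fun i hi => ?_⟩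
    have h1 := hAnosov (α i)
    rw [hlenα, hrpow] at h1
    have h2 := h1.trans_lt (hN i hi)
    rwa [div_lt_one (sv_pos _ hp1 hpd)] at h2
  obtain ⟨N, hN⟩ := hgap
  refine ⟨N, hN, ?_⟩
  set F : ℕ → (Euc d →L[ℝ] Euc d) := fun i => (U (α i)).starProjection with hF
  have hdist : ∀ i, dist (F i) (F (i + 1)) ≤ C * r ^ i := by
    intro i
    rw [dist_eq_norm]
    have hk1 := hKpos 1
    have hd1 : wordLength (S : Set Γ) ((α (i + 1))⁻¹ * α i) ≤ 1 := by
      rw [hα]; simp [Nat.dist]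
    have hd2 : wordLength (S : Set Γ) ((α i)⁻¹ * α (i + 1)) ≤ 1 := by
      rw [hα]; simp [Nat.dist]
    have h1 := hstep (α (i + 1)) (α i) 1 hd1
    have h2 := hstep (α i) (α (i + 1)) 1 hd2
    rw [hlenα, hrpow] at h1 h2
    have h3 := norm_proj_sub_le (U (α i)) (U (α (i + 1))) (by positivity) (by positivity) h1 h2
    refine h3.trans ?_
    have h4 : r ^ (i + 1) ≤ r ^ i := pow_le_pow_of_le_one hr0.le hr1.le (Nat.le_succ i)
    have h5 : K 1 * (c * r ^ (i + 1)) ≤ K 1 * (c * r ^ i) := by gcongr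
    rw [hC]
    linarith
  obtain ⟨P, hP⟩ := cauchySeq_tendsto_of_complete (cauchySeq_of_le_geometric r C hr1 hdist)
  have hFP : ∀ i, ‖F i - P‖ ≤ C * r ^ i / (1 - r) := fun i => by
    rw [← dist_eq_norm]
    exact dist_le_of_le_geometric_of_tendsto r C hr1 hdist hP i
  have hidem : P * P = P := by
    have h1 : Filter.Tendsto (fun i => F i * F i) Filter.atTop (nhds (P * P)) := hP.mul hP
    have h2 : (fun i => F i * F i) = F := by
      funext i
      exact (U (α i)).isIdempotentElem_starProjection
    rw [h2] at h1
    exact tendsto_nhds_unique h1 hP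
  set ξ : Submodule ℝ (Euc d) := LinearMap.range (P : Euc d →ₗ[ℝ] Euc d) with hξ
  have hPξ : ∀ x, P x ∈ ξ := fun x => ⟨x, rfl⟩
  have hfix : ∀ x ∈ ξ, P x = x := by
    rintro _ ⟨y, rfl⟩
    exact congrArg (fun f : Euc d →L[ℝ] Euc d => f y) hidem
  have hmin : ∀ v : Euc d, ‖v - ξ.starProjection v‖ ≤ ‖v - P v‖ := by
    intro v
    rw [ξ.starProjection_minimal v]
    exact ciInf_le (f := fun x : ξ => ‖v - x‖)
      ⟨0, by rintro _ ⟨y, rfl⟩; exact norm_nonneg _⟩ ⟨P v, hPξ v⟩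
  have hrank : Module.finrank ℝ ξ = p := by
    have ht : Filter.Tendsto (fun i => ‖F i - P‖) Filter.atTop (nhds 0) :=
      tendsto_iff_norm_sub_tendsto_zero.1 hP
    obtain ⟨i, hi⟩ := (ht.eventually (gt_mem_nhds zero_lt_one)).exists
    have hUr : Module.finrank ℝ (U (α i)) = p := finrank_attractor _ (by omega)
    have hsmall : ∀ v : Euc d, ‖v‖ ≤ ‖(F i - P) v‖ → v = 0 := by
      intro v hv
      by_contra hne
      have hvn : 0 < ‖v‖ := norm_pos_iff.2 hne
      have := (F i - P).le_opNorm v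
      nlinarith
    refine le_antisymm ?_ ?_
    · rw [← hUr]
      let f : ξ →ₗ[ℝ] U (α i) :=
        LinearMap.codRestrict (U (α i)) ((F i : Euc d →ₗ[ℝ] Euc d) ∘ₗ ξ.subtype)
          (fun x => (U (α i)).starProjection_apply_mem _)
      refine LinearMap.finrank_le_finrank_of_injective (f := f) ?_
      rw [← LinearMap.ker_eq_bot, LinearMap.ker_eq_bot']
      intro x hx
      have h1 : F i (x : Euc d) = 0 := congrArg Subtype.val hx
      refine Subtype.ext (hsmall x ?_)
      rw [sub_apply, h1, hfix x x.2, zero_sub, norm_neg]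
    · rw [← hUr]
      let f : U (α i) →ₗ[ℝ] ξ :=
        LinearMap.codRestrict ξ ((P : Euc d →ₗ[ℝ] Euc d) ∘ₗ (U (α i)).subtype)
          (fun x => hPξ _)
      refine LinearMap.finrank_le_finrank_of_injective (f := f) ?_
      rw [← LinearMap.ker_eq_bot, LinearMap.ker_eq_bot']
      intro x hx
      have h1 : P (x : Euc d) = 0 := congrArg Subtype.val hx
      refine Subtype.ext (hsmall x ?_)
      rw [sub_apply, h1, sub_zero,
        (U (α i)).starProjection_eq_self_iff.2 x.2]
  have h1r : 0 < 1 - r := by linarith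
  refine ⟨ξ, hrank, ?_, ?_⟩
  · intro i _
    refine grassDist_le _ _ (by positivity) fun v hv => (hmin v).trans ?_
    have h1 : v - P v = (F i - P) v := by
      rw [sub_apply, (U (α i)).starProjection_eq_self_iff.2 hv]
    rw [h1, hrpow]
    refine ((F i - P).le_opNorm v).trans (mul_le_mul_of_nonneg_right ?_ (norm_nonneg _))
    refine (hFP i).trans (le_of_eq ?_)
    ring
  · rintro β hβ hβ0 ⟨D, hD⟩
    have hbound : ∀ i, grassDist (cartanAttractor (mat (ρ (β i))) p) ξ ≤
        (K D * c + C / (1 - r)) * r ^ i := by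
      intro i
      have hkD := hKpos D
      refine grassDist_le _ _ (by positivity) fun v hv => (hmin v).trans ?_
      have h1 := hstep (α i) (β i) D (hD i) v hv
      rw [hlenα, hrpow] at h1
      have h2 : ‖(F i - P) v‖ ≤ C * r ^ i / (1 - r) * ‖v‖ :=
        ((F i - P).le_opNorm v).trans (mul_le_mul_of_nonneg_right (hFP i) (norm_nonneg _))
      have h3 : v - P v = (v - F i v) + (F i - P) v := by
        rw [sub_apply]; abel
      rw [h3]
      refine (norm_add_le _ _).trans ((add_le_add h1 h2).trans (le_of_eq ?_))
      ring
    refine squeeze_zero (fun i => grassDist_nonneg _ _) hbound ?_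
    have := (tendsto_pow_atTop_nhds_zero_of_lt_one hr0.le hr1).const_mul (K D * c + C / (1 - r))
    rwa [mul_zero] at this

end Paper
end
end

section
/- Let K be a field of characteristic zero, let d ≥ 3, and let V = K[X,Y]_{d−1} be the d-dimensional vector space of homogeneous polynomials of degree d−1 in the variables X, Y. For a nonzero linear form ℓ ∈ K[X,Y]_1 and 1 ≤ k ≤ d−1 let ζ^k(ℓ) := {P ∈ V : ℓ^{d−k} divides P}, a k-dimensional subspace of V. Then for all integers p, q, r ≥ 1 with p + q + r = d and all pairwise non-proportional nonzero linear forms ℓ₁, ℓ₂, ℓ₃ ∈ K[X,Y]_1, one has V = ζ^p(ℓ₁) ⊕ ζ^q(ℓ₂) ⊕ ζ^r(ℓ₃). -/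
noncomputable section

namespace Paper

/-- `zeta K d k ℓ` is `ζ^k(ℓ)`: the subspace of homogeneous polynomials of degree
`d-1` in two variables that are divisible by `ℓ^(d-k)`. -/
def zeta (K : Type*) [Field K] (d k : ℕ) (ℓ : MvPolynomial (Fin 2) K) :
    Submodule K (MvPolynomial (Fin 2) K) :=
  MvPolynomial.homogeneousSubmodule (Fin 2) K (d - 1) ⊓
    LinearMap.range (LinearMap.mulLeft K (ℓ ^ (d - k)))

/-- `ζ^k(ℓ)` regarded as a subspace of `V = K[X,Y]_{d-1}`. -/
def zetaIn (K : Type*) [Field K] (d k : ℕ) (ℓ : MvPolynomial (Fin 2) K) :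
    Submodule K ↥(MvPolynomial.homogeneousSubmodule (Fin 2) K (d - 1)) :=
  (zeta K d k ℓ).comap (MvPolynomial.homogeneousSubmodule (Fin 2) K (d - 1)).subtype

/-- A sparse polynomial with a nonzero root of high multiplicity vanishes. -/
theorem sparse_eq_zero {K : Type*} [Field K] [CharZero K] (a : K) (ha : a ≠ 0)
    (S : Finset ℕ) : ∀ f : Polynomial K, f.support ⊆ S →
      (Polynomial.X - Polynomial.C a) ^ S.card ∣ f → f = 0 := by
  induction S using Finset.induction_on with
  | empty =>
    intro f hf _
    simpa using hf
  | insert s T hs ih =>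
    intro f hf hdvd
    rw [Finset.card_insert_of_notMem hs] at hdvd
    have hc : ∀ i : ℕ, (Polynomial.X * Polynomial.derivative f - Polynomial.C (s : K) * f).coeff i
        = ((i : K) - s) * f.coeff i := by
      intro i
      cases i with
      | zero => simp
      | succ j =>
        simp [Polynomial.coeff_X_mul, Polynomial.coeff_derivative]
        ring
    have hg : Polynomial.X * Polynomial.derivative f - Polynomial.C (s : K) * f = 0 := by
      apply ih
      · intro i hi
        rw [Polynomial.mem_support_iff, hc] at hi
        have h1 : f.coeff i ≠ 0 := right_ne_zero_of_mul hi
        have h2 : i ≠ s := by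
          rintro rfl
          simp at hi
        have := hf (Polynomial.mem_support_iff.2 h1)
        exact (Finset.mem_insert.1 this).resolve_left h2
      · obtain ⟨g, rfl⟩ := hdvd
        refine dvd_sub ?_ ?_
        · apply Dvd.dvd.mul_left
          rw [Polynomial.derivative_mul, Polynomial.derivative_pow]
          refine dvd_add ?_ ?_
          · simp only [Nat.add_sub_cancel]
            exact Dvd.dvd.mul_right (Dvd.dvd.mul_right (Dvd.dvd.mul_left dvd_rfl _) _) _
          · exact Dvd.dvd.mul_right (pow_dvd_pow _ (Nat.le_succ _)) _
        · exact Dvd.dvd.mul_left (Dvd.dvd.mul_right (pow_dvd_pow _ (Nat.le_succ _)) _) _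
    have hf0 : ∀ i, i ≠ s → f.coeff i = 0 := by
      intro i hi
      have := hc i
      rw [hg, Polynomial.coeff_zero] at this
      rcases mul_eq_zero.1 this.symm with h | h
      · exact absurd (by exact_mod_cast sub_eq_zero.1 h) hi
      · exact h
    have hmon : f = Polynomial.monomial s (f.coeff s) := by
      ext i
      rw [Polynomial.coeff_monomial]
      split_ifs with h
      · rw [h]
      · exact hf0 i (Ne.symm h)
    have hev : f.eval a = 0 := by
      obtain ⟨g, rfl⟩ := hdvd
      simp
    rw [hmon, Polynomial.eval_monomial] at hev
    have : f.coeff s = 0 := (mul_eq_zero.1 hev).resolve_right (pow_ne_zero _ ha)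
    rw [hmon, this, Polynomial.monomial_zero_right]

/-- The space of binary forms of degree `n` has dimension at most `n+1`. -/
theorem finrank_forms_le (K : Type*) [Field K] (n : ℕ) :
    Module.finrank K ↥(MvPolynomial.homogeneousSubmodule (Fin 2) K n) ≤ n + 1 := by
  let L : ↥(MvPolynomial.homogeneousSubmodule (Fin 2) K n) →ₗ[K] (Fin (n + 1) → K) :=
    LinearMap.pi fun i => (MvPolynomial.lcoeff K
      (Finsupp.single (0 : Fin 2) (i : ℕ) + Finsupp.single 1 (n - i))).comp
      (Submodule.subtype _)
  have hL : Function.Injective L := by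
    rw [← LinearMap.ker_eq_bot, LinearMap.ker_eq_bot']
    rintro ⟨F, hF⟩ h
    rw [Submodule.mk_eq_zero]
    ext m
    rw [MvPolynomial.coeff_zero]
    by_cases hm : m.degree = n
    · have hm2 : m 0 + m 1 = n := by
        rw [Finsupp.degree_eq_sum] at hm
        simpa using hm
      have := congrFun h ⟨m 0, by omega⟩
      have e : m = Finsupp.single (0 : Fin 2) (m 0) + Finsupp.single 1 (n - m 0) := by
        ext j
        fin_cases j
        · simp
        · simp
          omega
      rw [e]
      simpa [L] using this
    · exact MvPolynomial.IsHomogeneous.coeff_eq_zero hF hm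
  simpa using LinearMap.finrank_le_finrank_of_injective hL

/-- The cofactor of a homogeneous multiple may be taken homogeneous. -/
theorem exists_of_mem_zeta {K : Type*} [Field K] {d k : ℕ} (hk : 1 ≤ k) (hkd : k ≤ d)
    {ℓ P : MvPolynomial (Fin 2) K}
    (h1 : ℓ ∈ MvPolynomial.homogeneousSubmodule (Fin 2) K 1) (hP : P ∈ zeta K d k ℓ) :
    ∃ A ∈ MvPolynomial.homogeneousSubmodule (Fin 2) K (k - 1), P = ℓ ^ (d - k) * A := by
  letI := MvPolynomial.gradedAlgebra (σ := Fin 2) (R := K)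
  obtain ⟨hP1, A, rfl⟩ := hP
  rw [LinearMap.mulLeft_apply] at hP1 ⊢
  have hl : ℓ ^ (d - k) ∈ MvPolynomial.homogeneousSubmodule (Fin 2) K (d - k) := by
    have := MvPolynomial.IsHomogeneous.pow h1 (d - k)
    rwa [one_mul] at this
  have key := DirectSum.coe_decompose_mul_of_left_mem_of_le (b := A)
    (MvPolynomial.homogeneousSubmodule (Fin 2) K) hl (show d - k ≤ d - 1 by omega)
  rw [DirectSum.decompose_of_mem_same _ hP1, show d - 1 - (d - k) = k - 1 by omega] at key
  exact ⟨_, SetLike.coe_mem _, key⟩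

/-- A dehomogenization adapted to two independent linear forms. -/
theorem exists_dehom {K : Type*} [Field K] (ℓ₁ ℓ₂ : MvPolynomial (Fin 2) K)
    (h1 : ℓ₁ ∈ MvPolynomial.homogeneousSubmodule (Fin 2) K 1) (h1ne : ℓ₁ ≠ 0)
    (h2 : ℓ₂ ∈ MvPolynomial.homogeneousSubmodule (Fin 2) K 1)
    (h12 : ∀ t : K, ℓ₂ ≠ t • ℓ₁) :
    ∃ φ : MvPolynomial (Fin 2) K →ₐ[K] Polynomial K, φ ℓ₁ = Polynomial.X ∧ φ ℓ₂ = 1 ∧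
      ∀ n, ∀ F ∈ MvPolynomial.homogeneousSubmodule (Fin 2) K n, φ F ∈ Polynomial.degreeLT K (n + 1)
      := by
  have lin : ∀ ℓ ∈ MvPolynomial.homogeneousSubmodule (Fin 2) K 1, ∃ a b : K,
      ℓ = a • MvPolynomial.X 0 + b • MvPolynomial.X 1 := by
    intro ℓ hℓ
    rw [MvPolynomial.homogeneousSubmodule_one_eq_span_X, Submodule.mem_span_range_iff_exists_fun]
      at hℓ
    obtain ⟨c, rfl⟩ := hℓ
    exact ⟨c 0, c 1, by simp⟩
  obtain ⟨a, b, rfl⟩ := lin _ h1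
  obtain ⟨c, e, rfl⟩ := lin _ h2
  have hD : a * e - b * c ≠ 0 := by
    intro hD
    by_cases ha : a = 0
    · have hb : b ≠ 0 := by
        rintro rfl
        simp [ha] at h1ne
      have hc : c = 0 := by
        subst ha
        simpa [hb] using hD
      apply h12 (e / b)
      simp [ha, hc, smul_smul, hb]
    · apply h12 (c / a)
      have : c / a * b = e := by
        field_simp
        linear_combination -hD
      simp [smul_smul, ha, this]
  refine ⟨MvPolynomial.aeval ![Polynomial.C (e / (a * e - b * c)) * Polynomial.X
      + Polynomial.C (-b / (a * e - b * c)),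
      Polynomial.C (-c / (a * e - b * c)) * Polynomial.X
      + Polynomial.C (a / (a * e - b * c))], ?_, ?_, ?_⟩
  · ext i
    simp [Polynomial.coeff_X, Polynomial.coeff_C]
    rcases i with _ | _ | i
    · simp
      field_simp
      ring
    · simp
      field_simp
      ring
    · simp
  · ext i
    simp [Polynomial.coeff_X, Polynomial.coeff_C, Polynomial.coeff_one]
    rcases i with _ | _ | i
    · simp
      rw [← mul_div_assoc, ← mul_div_assoc, ← add_div, div_eq_one_iff_eq hD]
      ring
    · simp
      field_simp
      ring
    · simp
  · intro n F hF
    have hF' : MvPolynomial.IsHomogeneous F n := hF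
    rw [Polynomial.degreeLT_succ_eq_degreeLE, Polynomial.mem_degreeLE,
      ← Polynomial.natDegree_le_iff_degree_le, ← mul_one n]
    apply MvPolynomial.aeval_natDegree_le _ hF'.totalDegree_le
    intro i
    fin_cases i <;> exact Polynomial.natDegree_linear_le

theorem dehom_equiv {K : Type*} [Field K] (ℓ₁ ℓ₂ : MvPolynomial (Fin 2) K)
    (h1 : ℓ₁ ∈ MvPolynomial.homogeneousSubmodule (Fin 2) K 1)
    (h2 : ℓ₂ ∈ MvPolynomial.homogeneousSubmodule (Fin 2) K 1)
    (φ : MvPolynomial (Fin 2) K →ₐ[K] Polynomial K) (hφ1 : φ ℓ₁ = Polynomial.X) (hφ2 : φ ℓ₂ = 1)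
    (n : ℕ)
    (hφ : ∀ F ∈ MvPolynomial.homogeneousSubmodule (Fin 2) K n,
      φ F ∈ Polynomial.degreeLT K (n + 1)) :
    (∀ F ∈ MvPolynomial.homogeneousSubmodule (Fin 2) K n, φ F = 0 → F = 0) ∧
    Module.finrank K ↥(MvPolynomial.homogeneousSubmodule (Fin 2) K n) = n + 1 := by
  have hfin : Module.Finite K ↥(MvPolynomial.homogeneousSubmodule (Fin 2) K n) :=
    Module.Finite.iff_fg.2 (MvPolynomial.homogeneousSubmodule_fg _ _ n)
  let L : ↥(MvPolynomial.homogeneousSubmodule (Fin 2) K n) →ₗ[K] Polynomial.degreeLT K (n + 1) :=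
    φ.toLinearMap.restrict hφ
  have hdim : Module.finrank K (Polynomial.degreeLT K (n + 1)) = n + 1 := by
    rw [(Polynomial.degreeLTEquiv K (n + 1)).finrank_eq]
    simp
  have hsurj : Function.Surjective L := by
    rintro ⟨f, hf⟩
    have hmem : ∀ i ∈ Finset.range (n + 1), f.coeff i • (ℓ₁ ^ i * ℓ₂ ^ (n - i)) ∈
        MvPolynomial.homogeneousSubmodule (Fin 2) K n := by
      intro i hi
      apply Submodule.smul_mem
      have := (MvPolynomial.IsHomogeneous.pow h1 i).mul (MvPolynomial.IsHomogeneous.pow h2 (n - i))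
      rwa [one_mul, one_mul, Nat.add_sub_cancel' (by simpa [Nat.lt_succ_iff] using hi)] at this
    refine ⟨⟨_, Submodule.sum_mem _ hmem⟩, ?_⟩
    apply Subtype.ext
    change φ (∑ i ∈ Finset.range (n + 1), f.coeff i • (ℓ₁ ^ i * ℓ₂ ^ (n - i))) = f
    rw [map_sum]
    simp only [map_smul, map_mul, map_pow, hφ1, hφ2, one_pow, mul_one]
    conv_rhs => rw [f.as_sum_range' (n + 1) (by
      rcases eq_or_ne f 0 with rfl | h0
      · simp
      · rw [Polynomial.natDegree_lt_iff_degree_lt h0]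
        exact Polynomial.mem_degreeLT.1 hf)]
    apply Finset.sum_congr rfl
    intro i _
    rw [← Polynomial.C_mul_X_pow_eq_monomial, Polynomial.smul_eq_C_mul]
  have hle := finrank_forms_le K n
  have hge := LinearMap.finrank_le_finrank_of_surjective hsurj
  have heq : Module.finrank K ↥(MvPolynomial.homogeneousSubmodule (Fin 2) K n) = n + 1 := by omega
  refine ⟨?_, heq⟩
  have hinj := (LinearMap.injective_iff_surjective_of_finrank_eq_finrank
    (heq.trans hdim.symm)).2 hsurj
  intro F hF h0
  have : L ⟨F, hF⟩ = L 0 := by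
    rw [map_zero]
    exact Subtype.ext h0
  have := hinj this
  simpa using congrArg Subtype.val this

/-- The univariate form of the independence claim. -/
theorem poly_indep {K : Type*} [Field K] [CharZero K] (p q r : ℕ) (hp : 1 ≤ p) (hq : 1 ≤ q)
    (α β : K) (hα : α ≠ 0) (hβ : β ≠ 0) (A B C : Polynomial K)
    (hA : A.degree < p) (hB : B.degree < q)
    (h : Polynomial.X ^ (q + r) * A + B +
      (Polynomial.C α * Polynomial.X + Polynomial.C β) ^ (p + q) * C = 0) :
    A = 0 ∧ B = 0 ∧ C = 0 := by
  have hne : (Polynomial.C α * Polynomial.X + Polynomial.C β) ≠ 0 := by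
    intro h0
    have := congrArg (fun f => Polynomial.coeff f 1) h0
    simp [Polynomial.coeff_C] at this
    exact hα this
  have hcA : ∀ i, (Polynomial.X ^ (q + r) * A).coeff i
      = if q + r ≤ i then A.coeff (i - (q + r)) else 0 := by
    intro i
    rw [Polynomial.coeff_X_pow_mul']
  have hA' : ∀ i, p ≤ i → A.coeff i = 0 := fun i hi =>
    Polynomial.coeff_eq_zero_of_degree_lt (lt_of_lt_of_le hA (by exact_mod_cast hi))
  have hB' : ∀ i, q ≤ i → B.coeff i = 0 := fun i hi =>
    Polynomial.coeff_eq_zero_of_degree_lt (lt_of_lt_of_le hB (by exact_mod_cast hi))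
  have hf : Polynomial.X ^ (q + r) * A + B = 0 := by
    have hcard : (Finset.range q ∪ Finset.Ico (q + r) (p + q + r)).card = p + q := by
      rw [Finset.card_union_of_disjoint]
      · simp
        omega
      · rw [Finset.disjoint_left]
        intro i
        simp
        omega
    apply sparse_eq_zero (-β / α) (div_ne_zero (neg_ne_zero.2 hβ) hα)
      (Finset.range q ∪ Finset.Ico (q + r) (p + q + r))
    · intro i hi
      by_contra hn
      simp only [Finset.mem_union, Finset.mem_range, Finset.mem_Ico, not_or] at hn
      apply Polynomial.mem_support_iff.1 hi
      rw [Polynomial.coeff_add, hcA, hB' i (by omega)]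
      split_ifs with h1
      · rw [hA' _ (by omega), add_zero]
      · simp
    · rw [hcard]
      rw [eq_neg_of_add_eq_zero_left h, dvd_neg]
      apply Dvd.dvd.mul_right
      apply pow_dvd_pow_of_dvd
      refine ⟨Polynomial.C α, ?_⟩
      rw [sub_mul, ← Polynomial.C_mul, div_mul_cancel₀ _ hα, Polynomial.C_neg]
      ring
  rw [hf, zero_add] at h
  have hC : C = 0 := (mul_eq_zero.1 h).resolve_left (pow_ne_zero _ hne)
  have hB0 : B = 0 := by
    ext i
    by_cases hi : q ≤ i
    · simpa using hB' i hi
    · have := congrArg (fun f => Polynomial.coeff f i) hf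
      simp only [Polynomial.coeff_add, hcA, if_neg (show ¬ q + r ≤ i by omega), zero_add] at this
      exact this
  rw [hB0, add_zero] at hf
  exact ⟨(mul_eq_zero.1 hf).resolve_left (pow_ne_zero _ Polynomial.X_ne_zero), hB0, hC⟩

/-- Proposition 6.8 (`VeronesseHyperconvex`): hyperconvexity of the Veronese flags.
For pairwise non-proportional nonzero linear forms `ℓ₁, ℓ₂, ℓ₃` and `p + q + r = d`,
`K[X,Y]_{d-1} = ζ^p(ℓ₁) ⊕ ζ^q(ℓ₂) ⊕ ζ^r(ℓ₃)`. -/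
theorem stmt14 {K : Type*} [Field K] [CharZero K] (d : ℕ) (hd : 3 ≤ d)
    (p q r : ℕ) (hp : 1 ≤ p) (hq : 1 ≤ q) (hr : 1 ≤ r) (hsum : p + q + r = d)
    (ℓ₁ ℓ₂ ℓ₃ : MvPolynomial (Fin 2) K)
    (h1 : ℓ₁ ∈ MvPolynomial.homogeneousSubmodule (Fin 2) K 1) (h1ne : ℓ₁ ≠ 0)
    (h2 : ℓ₂ ∈ MvPolynomial.homogeneousSubmodule (Fin 2) K 1) (h2ne : ℓ₂ ≠ 0)
    (h3 : ℓ₃ ∈ MvPolynomial.homogeneousSubmodule (Fin 2) K 1) (h3ne : ℓ₃ ≠ 0)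
    (h12 : ∀ t : K, ℓ₂ ≠ t • ℓ₁) (h13 : ∀ t : K, ℓ₃ ≠ t • ℓ₁)
    (h23 : ∀ t : K, ℓ₃ ≠ t • ℓ₂) :
    DirectSum.IsInternal
      (fun i : Fin 3 => ![zetaIn K d p ℓ₁, zetaIn K d q ℓ₂, zetaIn K d r ℓ₃] i) := by
  classical
  obtain ⟨φ, hφ1, hφ2, hφ⟩ := exists_dehom ℓ₁ ℓ₂ h1 h1ne h2 h12
  have hdim := fun n => (dehom_equiv ℓ₁ ℓ₂ h1 h2 φ hφ1 hφ2 n (hφ n)).2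
  have hinj := fun n => (dehom_equiv ℓ₁ ℓ₂ h1 h2 φ hφ1 hφ2 n (hφ n)).1
  have hfin : ∀ n, Module.Finite K ↥(MvPolynomial.homogeneousSubmodule (Fin 2) K n) := fun n =>
    Module.Finite.iff_fg.2 (MvPolynomial.homogeneousSubmodule_fg _ _ n)
  obtain ⟨α, β, hαβ⟩ : ∃ α β : K, φ ℓ₃ = Polynomial.C α * Polynomial.X + Polynomial.C β := by
    have := hφ 1 ℓ₃ h3
    rw [Polynomial.degreeLT_succ_eq_degreeLE, Polynomial.mem_degreeLE] at this
    exact ⟨_, _, Polynomial.eq_X_add_C_of_degree_le_one (by exact_mod_cast this)⟩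
  have hℓ₃ : ℓ₃ = α • ℓ₁ + β • ℓ₂ := by
    rw [← sub_eq_zero]
    apply hinj 1
    · exact Submodule.sub_mem _ h3 (Submodule.add_mem _ (Submodule.smul_mem _ _ h1)
        (Submodule.smul_mem _ _ h2))
    · rw [map_sub, map_add, map_smul, map_smul, hφ1, hφ2, hαβ, Polynomial.smul_eq_C_mul,
        Polynomial.smul_eq_C_mul, mul_one, sub_self]
  have hα : α ≠ 0 := by
    rintro rfl
    exact h23 β (by simpa using hℓ₃)
  have hβ : β ≠ 0 := by
    rintro rfl
    exact h13 α (by simpa using hℓ₃)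
  have hindep : ∀ A ∈ MvPolynomial.homogeneousSubmodule (Fin 2) K (p - 1),
      ∀ B ∈ MvPolynomial.homogeneousSubmodule (Fin 2) K (q - 1),
      ∀ C ∈ MvPolynomial.homogeneousSubmodule (Fin 2) K (r - 1),
      ℓ₁ ^ (d - p) * A + ℓ₂ ^ (d - q) * B + ℓ₃ ^ (d - r) * C = 0 → A = 0 ∧ B = 0 ∧ C = 0 := by
    intro A hA B hB C hC h
    have h' := congrArg φ h
    simp only [map_add, map_mul, map_pow, hφ1, hφ2, hαβ, one_pow, one_mul, map_zero] at h'
    rw [show d - p = q + r by omega, show d - r = p + q by omega] at h'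
    have hA' := Polynomial.mem_degreeLT.1 (hφ _ A hA)
    have hB' := Polynomial.mem_degreeLT.1 (hφ _ B hB)
    rw [Nat.sub_add_cancel hp] at hA'
    rw [Nat.sub_add_cancel hq] at hB'
    obtain ⟨eA, eB, eC⟩ := poly_indep p q r hp hq α β hα hβ _ _ _ hA' hB' h'
    exact ⟨hinj _ A hA eA, hinj _ B hB eB, hinj _ C hC eC⟩
  have hmul : ∀ k, 1 ≤ k → k ≤ d → ∀ ℓ ∈ MvPolynomial.homogeneousSubmodule (Fin 2) K 1,
      ∀ A ∈ MvPolynomial.homogeneousSubmodule (Fin 2) K (k - 1),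
      ℓ ^ (d - k) * A ∈ MvPolynomial.homogeneousSubmodule (Fin 2) K (d - 1) := by
    intro k hk hkd ℓ hℓ A hA
    have := (MvPolynomial.IsHomogeneous.pow hℓ (d - k)).mul hA
    rwa [one_mul, show d - k + (k - 1) = d - 1 by omega] at this
  let M : (k : ℕ) → 1 ≤ k → k ≤ d → (ℓ : MvPolynomial (Fin 2) K) →
      ℓ ∈ MvPolynomial.homogeneousSubmodule (Fin 2) K 1 →
      (↥(MvPolynomial.homogeneousSubmodule (Fin 2) K (k - 1)) →ₗ[K]
        ↥(MvPolynomial.homogeneousSubmodule (Fin 2) K (d - 1))) := fun k hk hkd ℓ hℓ =>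
    (LinearMap.mulLeft K (ℓ ^ (d - k))).restrict (hmul k hk hkd ℓ hℓ)
  let L := (M p hp (by omega) ℓ₁ h1).coprod ((M q hq (by omega) ℓ₂ h2).coprod
    (M r hr (by omega) ℓ₃ h3))
  have hLinj : Function.Injective L := by
    rw [← LinearMap.ker_eq_bot, LinearMap.ker_eq_bot']
    rintro ⟨⟨A, hA⟩, ⟨B, hB⟩, ⟨C, hC⟩⟩ h
    have h' := congrArg Subtype.val h
    obtain ⟨rfl, rfl, rfl⟩ := hindep A hA B hB C hC (by
      rw [add_assoc]
      exact h')
    rfl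
  have hLsurj : Function.Surjective L := by
    refine (LinearMap.injective_iff_surjective_of_finrank_eq_finrank ?_).1 hLinj
    rw [Module.finrank_prod, Module.finrank_prod, hdim, hdim, hdim, hdim]
    omega
  apply DirectSum.isInternal_submodule_of_iSupIndep_of_iSup_eq_top
  · have hz : ∀ x ∈ zetaIn K d p ℓ₁, ∀ y ∈ zetaIn K d q ℓ₂, ∀ z ∈ zetaIn K d r ℓ₃,
        x + y + z = 0 → x = 0 ∧ y = 0 ∧ z = 0 := by
      intro x hx y hy z hz hs
      obtain ⟨A, hA, eA⟩ := exists_of_mem_zeta hp (by omega) h1 hx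
      obtain ⟨B, hB, eB⟩ := exists_of_mem_zeta hq (by omega) h2 hy
      obtain ⟨C, hC, eC⟩ := exists_of_mem_zeta hr (by omega) h3 hz
      have hs' := congrArg Subtype.val hs
      obtain ⟨rfl, rfl, rfl⟩ := hindep A hA B hB C hC (by
        rw [← eA, ← eB, ← eC]
        exact hs')
      rw [mul_zero] at eA eB eC
      exact ⟨Subtype.ext eA, Subtype.ext eB, Subtype.ext eC⟩
    rw [iSupIndep_def]
    intro i
    rw [Submodule.disjoint_def]
    intro x hx hx'
    have hsup : ∀ i a b : Fin 3, (∀ j, j ≠ i → j = a ∨ j = b) →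
        (⨆ (j : Fin 3) (_ : j ≠ i),
          ![zetaIn K d p ℓ₁, zetaIn K d q ℓ₂, zetaIn K d r ℓ₃] j) ≤
          ![zetaIn K d p ℓ₁, zetaIn K d q ℓ₂, zetaIn K d r ℓ₃] a ⊔
          ![zetaIn K d p ℓ₁, zetaIn K d q ℓ₂, zetaIn K d r ℓ₃] b := by
      intro i a b hab
      refine iSup₂_le fun j hj => ?_
      rcases hab j hj with rfl | rfl
      · exact le_sup_left
      · exact le_sup_right
    fin_cases i
    · obtain ⟨y, hy, z, hz', e⟩ := Submodule.mem_sup.1 (hsup 0 1 2 (by decide) hx')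
      exact neg_eq_zero.1 (hz (-x) (Submodule.neg_mem _ hx) y hy z hz' (by rw [← e]; abel)).1
    · obtain ⟨y, hy, z, hz', e⟩ := Submodule.mem_sup.1 (hsup 1 0 2 (by decide) hx')
      exact neg_eq_zero.1 (hz y hy (-x) (Submodule.neg_mem _ hx) z hz' (by rw [← e]; abel)).2.1
    · obtain ⟨y, hy, z, hz', e⟩ := Submodule.mem_sup.1 (hsup 2 0 1 (by decide) hx')
      exact neg_eq_zero.1 (hz y hy z hz' (-x) (Submodule.neg_mem _ hx) (by rw [← e]; abel)).2.2
  · rw [eq_top_iff]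
    intro v _
    obtain ⟨⟨A, B, C⟩, rfl⟩ := hLsurj v
    have hM : ∀ k hk hkd ℓ hℓ A, M k hk hkd ℓ hℓ A ∈ zetaIn K d k ℓ := by
      intro k hk hkd ℓ hℓ A
      exact ⟨(M k hk hkd ℓ hℓ A).2, A.1, rfl⟩
    refine Submodule.add_mem _ ?_ (Submodule.add_mem _ ?_ ?_)
    · exact Submodule.mem_iSup_of_mem (0 : Fin 3) (hM p hp (by omega) ℓ₁ h1 A)
    · exact Submodule.mem_iSup_of_mem (1 : Fin 3) (hM q hq (by omega) ℓ₂ h2 B)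
    · exact Submodule.mem_iSup_of_mem (2 : Fin 3) (hM r hr (by omega) ℓ₃ h3 C)

end Paper
end
end
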